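/- Let n, t be positive integers with n ≥ 2t+1. If F ⊆ S_n is a t-cycle-intersecting family of permutations, then |F| ≤ (n−t)!, and equality holds if and only if F is the stabilizer of t points. -/

import Mathlib

open Equiv Finset
open scoped Classical

noncomputable section

/-- A common cycle of two permutations `σ` and `π`: a nonempty subset `B` invariant
under both, on which they agree, and on which `σ` acts as a single cycle. -/
def IsCommonCycle {n : ℕ} (σ π : Equiv.Perm (Fin n)) (B : Finset (Fin n)) : Prop :=
  B.Nonempty ∧ (∀ x ∈ B, σ x ∈ B) ∧ (∀ x ∈ B, π x ∈ B) ∧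
  (∀ x ∈ B, σ x = π x) ∧ (∀ x ∈ B, ∀ y ∈ B, σ.SameCycle x y)

/-- A family of permutations is `t`-cycle-intersecting if any two of its members
have at least `t` common cycles on pairwise disjoint subsets. -/
def TCycleIntersecting {n : ℕ} (t : ℕ) (F : Set (Equiv.Perm (Fin n))) : Prop :=
  ∀ σ ∈ F, ∀ π ∈ F, ∃ 𝒞 : Finset (Finset (Fin n)),
    t ≤ 𝒞.card ∧ (∀ B ∈ 𝒞, IsCommonCycle σ π B) ∧
    (𝒞 : Set (Finset (Fin n))).Pairwise fun A B => Disjoint A B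

/-- The `ij`-fixing of a permutation: if `σ i = j` then make `i` a fixed point and
send `σ⁻¹ i` to `j`, leaving everything else unchanged. -/
def ijFix {n : ℕ} (i j : Fin n) (σ : Equiv.Perm (Fin n)) : Equiv.Perm (Fin n) :=
  if σ i = j then σ * Equiv.swap i (σ⁻¹ i) else σ

/-- The `ij`-fixing operation on a family of permutations. -/
def fixFamOp {n : ℕ} (i j : Fin n) (A : Set (Equiv.Perm (Fin n))) :
    Set (Equiv.Perm (Fin n)) :=
  (fun σ => if ijFix i j σ ∈ A then σ else ijFix i j σ) '' A

/-- A family is fixed if it is closed under all `ij`-fixing operations. -/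
def IsFixedFam {n : ℕ} (A : Set (Equiv.Perm (Fin n))) : Prop :=
  ∀ i j : Fin n, i ≠ j → fixFamOp i j A = A

/-- The `(i,j)`-compression of a permutation: if `σ i ≠ i` and `σ j = j`, then
fix `i`, send `j` to `σ i` and `σ⁻¹ i` to `j`; otherwise leave `σ` unchanged. -/
def compPerm {n : ℕ} (i j : Fin n) (σ : Equiv.Perm (Fin n)) : Equiv.Perm (Fin n) :=
  if σ i ≠ i ∧ σ j = j then (Equiv.swap i (σ i) * Equiv.swap i j) * σ else σ

/-- The `(i,j)`-compression operation on a family of permutations. -/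
def compFam {n : ℕ} (i j : Fin n) (A : Set (Equiv.Perm (Fin n))) :
    Set (Equiv.Perm (Fin n)) :=
  (fun σ => if compPerm i j σ ∈ A then σ else compPerm i j σ) '' A

/-- A family is compressed if it is closed under all `(i,j)`-compressions. -/
def IsCompressedFam {n : ℕ} (A : Set (Equiv.Perm (Fin n))) : Prop :=
  ∀ i j : Fin n, i < j → compFam i j A = A

/-- `F` is the stabilizer of `t` points: there are `t` distinct points such that `F`
consists exactly of the permutations fixing all of them. -/
def IsTPointStabilizer {n : ℕ} (t : ℕ) (F : Set (Equiv.Perm (Fin n))) : Prop :=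
  ∃ a : Fin t ↪ Fin n, F = {σ | ∀ k, σ (a k) = a k}

/-- The set of fixed points of a permutation. -/
def fixSet {n : ℕ} (σ : Equiv.Perm (Fin n)) : Finset (Fin n) :=
  Finset.univ.filter fun x => σ x = x

/-- The up-permutation of a set `B`: all permutations fixing every element of `B`. -/
def UpSet {n : ℕ} (B : Finset (Fin n)) : Set (Equiv.Perm (Fin n)) :=
  {σ | ∀ x ∈ B, σ x = x}

/-- The up-permutation of a collection of sets. -/
def UpFam {n : ℕ} (g : Set (Finset (Fin n))) : Set (Equiv.Perm (Fin n)) :=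
  ⋃ B ∈ g, UpSet B

/-- `g` is a generating set for `F`: it contains no set of size `n-1` and
`Up(g) = F`. -/
def IsGenSet {n : ℕ} (g : Set (Finset (Fin n))) (F : Set (Equiv.Perm (Fin n))) : Prop :=
  (∀ B ∈ g, B.card ≠ n - 1) ∧ UpFam g = F

/-- `s⁺(B)`: the largest element of `B`, in the 1-based numbering of `[n] = {1,…,n}`
(so `s⁺(∅) = 0`). -/
def sPlus {n : ℕ} (B : Finset (Fin n)) : ℕ := B.sup fun x => (x : ℕ) + 1

/-- `s⁺(g) = max {s⁺(B) : B ∈ g}`. -/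
def sPlusFam {n : ℕ} (g : Set (Finset (Fin n))) : ℕ := sSup (sPlus '' g)

/-- `s_min(G(F)) = min {s⁺(g) : g a generating set of F}`. -/
def sMin {n : ℕ} (F : Set (Equiv.Perm (Fin n))) : ℕ :=
  sInf (sPlusFam '' {g | IsGenSet g F})

/-- `L(B)`: all sets obtained from `B` by left-shifting, i.e. sets of the same size
whose `i`-th smallest element is at most the `i`-th smallest element of `B`. -/
def LSet {n : ℕ} (B : Finset (Fin n)) : Set (Finset (Fin n)) :=
  {A | ∃ h : A.card = B.card, ∀ i : Fin B.card,
      A.orderEmbOfFin h i ≤ B.orderEmbOfFin rfl i}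

/-- `L(g) = ⋃_{B ∈ g} L(B)`. -/
def LFam {n : ℕ} (g : Set (Finset (Fin n))) : Set (Finset (Fin n)) :=
  ⋃ B ∈ g, LSet B

/-- `L_*(g)`: the minimal (under inclusion) elements of `L(g)`. -/
def Lstar {n : ℕ} (g : Set (Finset (Fin n))) : Set (Finset (Fin n)) :=
  {A | A ∈ LFam g ∧ ∀ A' ∈ LFam g, A' ⊆ A → A' = A}

/-- The interval `[m] = {1,…,m}` inside `Fin n` (1-based). -/
def Ival (n m : ℕ) : Finset (Fin n) := Finset.univ.filter fun x => (x : ℕ) < m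

/-- `D(E) = {σ : fix(σ) ∩ [s⁺(E)] = E}`. -/
def DSet {n : ℕ} (E : Finset (Fin n)) : Set (Equiv.Perm (Fin n)) :=
  {σ | fixSet σ ∩ Ival n (sPlus E) = E}

/-
Replacing each member `σ` of the family by its `ij`-fixing, unless that one already belongs to the
family, preserves the size of the family and the `t`-cycle-intersection property and creates fixed
points, so we may assume that the family is closed under these operations. Then the sets of fixed
points of its members pairwise meet in at least `t` points, and the size of the family is at most
the weight of the family of these sets, where a set missing `m` points weighs as much as there are
derangements of `m` points. Shift a `t`-intersecting family of sets of maximal weight to the left.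
If all its members have more than `t` points, then for the last point `s` that matters, the sets
that need `s` can be pushed off `s` with a gain of weight, which is absurd. So some member has `t`
points and is contained in all the others. Finally, if fixing turns the family into the stabilizer
of a `t`-set `T`, then a permutation of the family outside the stabilizer has a companion in the
family that disagrees with it everywhere off `T`, and the two have fewer than `t` common cycles.
-/

section BinomialSum

variable {M : Type*} [AddCommMonoid M]

/-- `binomialSum w r m` is the `r`-fold binomial sum `∑ j, (r.choose j) • w (m + j)`, defined by
Pascal's recursion. It is the total weight of an interval of length `r` of sets, when a set with
`m` missing elements weighs `w m`. -/
def binomialSum (w : ℕ → M) : ℕ → ℕ → M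
  | 0, m => w m
  | r + 1, m => binomialSum w r m + binomialSum w r (m + 1)

lemma binomialSum_pos [PartialOrder M] [IsOrderedCancelAddMonoid M] {w : ℕ → M}
    (hw : ∀ m, 0 < w m) (r m : ℕ) : 0 < binomialSum w r m := by
  induction r generalizing m with
  | zero => exact hw m
  | succ r ih => exact add_pos (ih m) (ih (m + 1))

lemma sum_powerset_eq_binomialSum {α : Type*} (w : ℕ → M) (Q : Finset α) (m : ℕ) :
    ∑ X ∈ Q.powerset, w (m + (#Q - #X)) = binomialSum w #Q m := by
  induction Q using Finset.induction_on generalizing m with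
  | empty => simp [binomialSum]
  | insert a Q ha ih =>
    have h_compl : ∀ X ∈ Q.powerset, w (m + (#Q + 1 - #X)) = w (m + 1 + (#Q - #X)) := fun X hX ↦ by
      have := card_le_card (mem_powerset.1 hX)
      congr 1
      omega
    have h_insert : ∀ X ∈ Q.powerset,
        w (m + (#Q + 1 - #(insert a X))) = w (m + (#Q - #X)) := fun X hX ↦ by
      rw [card_insert_of_notMem (notMem_mono (mem_powerset.1 hX) ha), Nat.add_sub_add_right]
    rw [sum_powerset_insert ha, card_insert_of_notMem ha, sum_congr rfl h_compl,
      sum_congr rfl h_insert, ih, ih, binomialSum, add_comm]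

lemma sum_Icc_card_compl {α : Type*} [Fintype α] [DecidableEq α] (w : ℕ → M) {A B : Finset α}
    (h : A ⊆ B) : ∑ Y ∈ Icc A B, w #Yᶜ = binomialSum w #(B \ A) #Bᶜ := by
  have h_disj {X : Finset α} (hX : X ∈ (B \ A).powerset) : Disjoint A X :=
    disjoint_sdiff.mono_right (mem_powerset.1 hX)
  have h_inj : Set.InjOn (A ∪ ·) (B \ A).powerset := fun X hX Y hY hXY ↦ by
    rw [← union_sdiff_cancel_left (h_disj hX), ← union_sdiff_cancel_left (h_disj hY)]
    exact congrArg (· \ A) hXY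
  rw [Icc_eq_image_powerset h, sum_image h_inj, ← sum_powerset_eq_binomialSum]
  refine sum_congr rfl fun X hX ↦ congrArg w ?_
  have := card_union_of_disjoint (h_disj hX)
  have := card_le_card (mem_powerset.1 hX)
  have := card_sdiff_add_card_eq_card h
  have := card_add_card_compl B
  have := card_add_card_compl (A ∪ X)
  omega

lemma binomialSum_toLex {N : Type*} [AddCommMonoid N] (u : ℕ → M) (v : ℕ → N)
    (r m : ℕ) : binomialSum (fun m ↦ toLex (u m, v m)) r m =
      toLex (binomialSum u r m, binomialSum v r m) := by
  induction r generalizing m with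
  | zero => rfl
  | succ r ih =>
    simp only [binomialSum, ih]
    rfl

end BinomialSum

section Shift

open UV

variable {α : Type*} [DecidableEq α]

/-- A family of sets is `t`-intersecting if any two members, including a member and itself, have at
least `t` elements in common. -/
def SetIntersecting (t : ℕ) (𝒢 : Finset (Finset α)) : Prop :=
  ∀ A ∈ 𝒢, ∀ B ∈ 𝒢, t ≤ #(A ∩ B)

lemma SetIntersecting.subset_of_card_le {t : ℕ} {𝒢 : Finset (Finset α)}
    (h𝒢 : SetIntersecting t 𝒢) {A B : Finset α} (hA : A ∈ 𝒢) (hAt : #A ≤ t) (hB : B ∈ 𝒢) : A ⊆ B :=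
  inter_eq_left.1 (eq_of_subset_of_card_le inter_subset_left (hAt.trans (h𝒢 A hA B hB)))

lemma compress_singleton {i j : α} {A : Finset α} (hi : i ∉ A) (hj : j ∈ A) :
    compress {i} {j} A = insert i (A.erase j) := by
  have hij : i ≠ j := fun h ↦ hi (h ▸ hj)
  rw [compress_of_disjoint_of_le (disjoint_singleton_left.2 hi) (singleton_subset_iff.2 hj),
    sup_eq_union, union_comm, ← insert_eq, sdiff_singleton_eq_erase, erase_insert_of_ne hij]

lemma notMem_and_mem_of_compress_ne {i j : α} {A : Finset α} (h : compress {i} {j} A ≠ A) :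
    i ∉ A ∧ j ∈ A := by
  simpa using (ite_ne_right_iff.1 h).1

lemma exists_eq_insert_erase_of_mem_compression {i j : α} {𝒢 : Finset (Finset α)} {A : Finset α}
    (hA : A ∈ compression {i} {j} 𝒢) :
    (A ∈ 𝒢 ∧ compress {i} {j} A ∈ 𝒢) ∨ ∃ B ∈ 𝒢, i ∉ B ∧ j ∈ B ∧ A = insert i (B.erase j) := by
  refine (mem_compression.1 hA).imp_right ?_
  rintro ⟨hA, B, hB, rfl⟩
  obtain ⟨hi, hj⟩ := notMem_and_mem_of_compress_ne fun h ↦ hA (h.symm ▸ hB)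
  exact ⟨B, hB, hi, hj, compress_singleton hi hj⟩

lemma SetIntersecting.le_card_inter_insert_erase {t : ℕ} {𝒢 : Finset (Finset α)}
    (h𝒢 : SetIntersecting t 𝒢) {i j : α} {A B : Finset α} (hA : A ∈ 𝒢)
    (hA' : compress {i} {j} A ∈ 𝒢) (hB : B ∈ 𝒢) (hi : i ∉ B) :
    t ≤ #(A ∩ insert i (B.erase j)) := by
  have hAB := h𝒢 A hA B hB
  by_cases hiA : i ∈ A
  · rw [inter_insert_of_mem hiA, inter_erase, card_insert_of_notMem (by simp [hi])]
    exact hAB.trans (Nat.sub_le_iff_le_add.1 pred_card_le_card_erase)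
  by_cases hjA : j ∈ A
  · rw [compress_singleton hiA hjA] at hA'
    have h := h𝒢 _ hA' B hB
    rwa [insert_inter_of_notMem hi, erase_inter, ← inter_erase,
      ← inter_insert_of_notMem hiA] at h
  · rwa [inter_insert_of_notMem hiA, inter_erase, erase_eq_of_notMem (by simp [hjA])]

lemma card_insert_erase_inter_insert_erase {i j : α} {A B : Finset α} (hiA : i ∉ A) (hjA : j ∈ A)
    (hjB : j ∈ B) : #(insert i (A.erase j) ∩ insert i (B.erase j)) = #(A ∩ B) := by
  rw [← insert_inter_distrib, erase_inter, inter_erase, erase_idem,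
    card_insert_of_notMem (by simp [hiA]), card_erase_add_one (mem_inter.2 ⟨hjA, hjB⟩)]

lemma SetIntersecting.compression {t : ℕ} {𝒢 : Finset (Finset α)} (h𝒢 : SetIntersecting t 𝒢)
    (i j : α) : SetIntersecting t (compression {i} {j} 𝒢) := by
  intro A hA B hB
  obtain ⟨hA, hA'⟩ | ⟨A, hA₀, hiA, hjA, rfl⟩ := exists_eq_insert_erase_of_mem_compression hA <;>
  obtain ⟨hB, hB'⟩ | ⟨B, hB₀, hiB, hjB, rfl⟩ := exists_eq_insert_erase_of_mem_compression hB
  · exact h𝒢 A hA B hB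
  · exact h𝒢.le_card_inter_insert_erase hA hA' hB₀ hiB
  · rw [inter_comm]
    exact h𝒢.le_card_inter_insert_erase hB hB' hA₀ hiA
  · rw [card_insert_erase_inter_insert_erase hiA hjA hjB]
    exact h𝒢 A hA₀ B hB₀

lemma sum_compression {M : Type*} [AddCommMonoid M] (f : Finset α → M) (u v : Finset α)
    (𝒢 : Finset (Finset α)) :
    ∑ A ∈ compression u v 𝒢, f A =
      ∑ A ∈ 𝒢, f (if compress u v A ∈ 𝒢 then A else compress u v A) := by
  rw [UV.compression, sum_union compress_disjoint, filter_image, sum_image compress_injOn,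
    ← sum_filter_add_sum_filter_not 𝒢 (compress u v · ∈ 𝒢)]
  congr 1 <;> exact sum_congr rfl fun A hA ↦ by simp [(mem_filter.1 hA).2]

lemma sum_compression_singleton_card {M : Type*} [AddCommMonoid M] (f : ℕ → M) (i j : α)
    (𝒢 : Finset (Finset α)) : ∑ A ∈ compression {i} {j} 𝒢, f #A = ∑ A ∈ 𝒢, f #A := by
  rw [sum_compression]
  refine sum_congr rfl fun A _ ↦ congrArg f ?_
  split_ifs
  · rfl
  · exact card_compress (by simp) A

lemma sum_insert_erase_lt {f : α → ℕ} {i j : α} (hij : f i < f j) {A : Finset α}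
    (hi : i ∉ A) (hj : j ∈ A) : ∑ x ∈ insert i (A.erase j), f x < ∑ x ∈ A, f x := by
  rw [sum_insert (by simp [hi]), ← add_sum_erase A f hj]
  exact Nat.add_lt_add_right hij _

lemma sum_compression_singleton_lt {f : α → ℕ} {i j : α} (hij : f i < f j)
    {𝒢 : Finset (Finset α)} {A : Finset α} (hA : A ∈ 𝒢) (hA' : compress {i} {j} A ∉ 𝒢) :
    ∑ B ∈ compression {i} {j} 𝒢, ∑ x ∈ B, f x < ∑ B ∈ 𝒢, ∑ x ∈ B, f x := by
  have h_lt {B : Finset α} (hB : B ∈ 𝒢) (hB' : compress {i} {j} B ∉ 𝒢) :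
      ∑ x ∈ compress {i} {j} B, f x < ∑ x ∈ B, f x := by
    obtain ⟨hi, hj⟩ := notMem_and_mem_of_compress_ne fun h ↦ hB' (h.symm ▸ hB)
    rw [compress_singleton hi hj]
    exact sum_insert_erase_lt hij hi hj
  rw [sum_compression]
  refine sum_lt_sum (fun B hB ↦ ?_) ⟨A, hA, by simpa only [if_neg hA'] using h_lt hA hA'⟩
  split_ifs with hB'
  · rfl
  · exact (h_lt hB hB').le

lemma sdiff_mem_of_forall_erase_mem {𝒢 : Finset (Finset α)} {Q A : Finset α}
    (h : ∀ u ∈ Q, ∀ B ∈ 𝒢, B.erase u ∈ 𝒢) (hA : A ∈ 𝒢) : A \ Q ∈ 𝒢 := by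
  induction Q using Finset.induction_on with
  | empty => simpa
  | insert u Q _ ih =>
    rw [sdiff_insert]
    exact h u (mem_insert_self u Q) _ (ih fun v hv ↦ h v (mem_insert_of_mem hv))

end Shift

section Weight

variable {α M : Type*} [Fintype α] [DecidableEq α] [AddCommMonoid M]

/-- The weight of a family of sets, each set being weighted according to the number of points it
misses. -/
def weight (w : ℕ → M) (𝒢 : Finset (Finset α)) : M :=
  ∑ A ∈ 𝒢, w #Aᶜ

lemma weight_compression_singleton (w : ℕ → M) (i j : α) (𝒢 : Finset (Finset α)) :
    weight w (UV.compression {i} {j} 𝒢) = weight w 𝒢 := by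
  simp only [weight, card_compl]
  exact sum_compression_singleton_card (fun c ↦ w (Fintype.card α - c)) i j 𝒢

lemma weight_toLex {N : Type*} [AddCommMonoid N] (u : ℕ → M) (v : ℕ → N) (𝒢 : Finset (Finset α)) :
    weight (fun m ↦ toLex (u m, v m)) 𝒢 = toLex (weight u 𝒢, weight v 𝒢) :=
  (map_sum (toLexAddEquiv (M × N)) (fun A ↦ (u #Aᶜ, v #Aᶜ)) 𝒢).symm.trans <|
    congrArg toLex (prod_mk_sum _ _ _).symm

/-- The sets whose part outside `Q` belongs to `ℬ`. -/
def cylinder (Q : Finset α) (ℬ : Finset (Finset α)) : Finset (Finset α) :=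
  univ.filter fun A ↦ A \ Q ∈ ℬ

lemma mem_cylinder {Q A : Finset α} {ℬ : Finset (Finset α)} : A ∈ cylinder Q ℬ ↔ A \ Q ∈ ℬ :=
  mem_filter_univ A

lemma weight_cylinder (w : ℕ → M) {Q : Finset α} {ℬ : Finset (Finset α)}
    (hℬ : ∀ E ∈ ℬ, Disjoint E Q) :
    weight w (cylinder Q ℬ) = ∑ E ∈ ℬ, binomialSum w #Q #(E ∪ Q)ᶜ := by
  rw [weight, ← sum_fiberwise_of_maps_to (g := (· \ Q)) fun A ↦ mem_cylinder.1]
  refine sum_congr rfl fun E hE ↦ ?_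
  have h_fiber : (cylinder Q ℬ).filter (· \ Q = E) = Icc E (E ∪ Q) := by
    ext A
    rw [mem_filter, mem_cylinder, mem_Icc]
    constructor
    · rintro ⟨-, rfl⟩
      exact ⟨sdiff_subset, by simp⟩
    · rintro ⟨hEA, hAE⟩
      obtain rfl : A \ Q = E := (sdiff_le_iff'.2 hAE).antisymm
        (subset_sdiff.2 ⟨hEA, hℬ E hE⟩)
      exact ⟨hE, rfl⟩
  rw [h_fiber, sum_Icc_card_compl w subset_union_left, union_sdiff_cancel_left (hℬ E hE)]

end Weight

/-- A `t`-intersecting family of maximal weight that is closed under shifts to the left and all of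
whose members have more than `t` elements. The pushing argument shows that there is none. -/
structure IsExtremalFamily {α M : Type*} [Fintype α] [LinearOrder α] [AddCommMonoid M]
    [LinearOrder M] (w : ℕ → M) (t : ℕ) (𝒢 : Finset (Finset α)) : Prop where
  nonempty : 𝒢.Nonempty
  inter : SetIntersecting t 𝒢
  lt_card : ∀ A ∈ 𝒢, t < #A
  weight_le : ∀ ℋ : Finset (Finset α), SetIntersecting t ℋ → weight w ℋ ≤ weight w 𝒢
  shift_mem : ∀ i j, i < j → ∀ A ∈ 𝒢, i ∉ A → j ∈ A → insert i (A.erase j) ∈ 𝒢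

section Extremal

variable {α M : Type*} [Fintype α] [LinearOrder α] [AddCommMonoid M] [LinearOrder M]
  {w : ℕ → M} {t : ℕ} {𝒢 : Finset (Finset α)}

lemma exists_isExtremalFamily [LocallyFiniteOrderBot α] (h_ne : 𝒢.Nonempty)
    (h𝒢 : SetIntersecting t 𝒢) (h_card : ∀ A ∈ 𝒢, t < #A)
    (h_max : ∀ ℋ : Finset (Finset α), SetIntersecting t ℋ → weight w ℋ ≤ weight w 𝒢) :
    ∃ ℋ : Finset (Finset α), IsExtremalFamily w t ℋ := by
  let IsCandidate (ℋ : Finset (Finset α)) : Prop :=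
    ℋ.Nonempty ∧ SetIntersecting t ℋ ∧ (∀ A ∈ ℋ, t < #A) ∧ weight w ℋ = weight w 𝒢
  have h_compression {ℋ} (hℋ : IsCandidate ℋ) (i j : α) :
      IsCandidate (UV.compression {i} {j} ℋ) := by
    obtain ⟨hℋ_ne, hℋ_int, hℋ_card, hℋ_weight⟩ := hℋ
    refine ⟨?_, hℋ_int.compression i j, fun B hB ↦ ?_,
      (weight_compression_singleton w i j ℋ).trans hℋ_weight⟩
    · rw [← card_pos, UV.card_compression]
      exact hℋ_ne.card_pos
    · obtain ⟨hB, -⟩ | ⟨C, hC, hi, hj, rfl⟩ := exists_eq_insert_erase_of_mem_compression hB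
      · exact hℋ_card B hB
      · rw [card_insert_of_notMem (by simp [hi]), card_erase_add_one hj]
        exact hℋ_card C hC
  obtain ⟨ℋ, hℋ, h_min⟩ := Set.exists_min_image {ℋ | IsCandidate ℋ}
    (fun ℋ ↦ ∑ A ∈ ℋ, ∑ x ∈ A, #(Iio x)) (Set.toFinite _) ⟨𝒢, h_ne, h𝒢, h_card, rfl⟩
  obtain ⟨hℋ_ne, hℋ_int, hℋ_card, hℋ_weight⟩ := id hℋ
  refine ⟨ℋ, hℋ_ne, hℋ_int, hℋ_card, fun 𝒥 h𝒥 ↦ hℋ_weight ▸ h_max 𝒥 h𝒥,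
    fun i j hij A hA hi hj ↦ ?_⟩
  rw [← compress_singleton hi hj]
  by_contra hA'
  have h_lt : #(Iio i) < #(Iio j) := card_lt_card (Iio_ssubset_Iio hij)
  exact (sum_compression_singleton_lt (f := fun x ↦ #(Iio x)) h_lt hA hA').not_ge
    (h_min _ (h_compression hℋ i j))

lemma IsExtremalFamily.mem_of_subset [IsOrderedCancelAddMonoid M] (h𝒢 : IsExtremalFamily w t 𝒢)
    (hw : ∀ m, 0 < w m) {A B : Finset α} (hA : A ∈ 𝒢) (hAB : A ⊆ B) : B ∈ 𝒢 := by
  by_contra hB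
  have h_inter : SetIntersecting t (insert B 𝒢) := by
    have hB' : ∀ C ∈ 𝒢, t ≤ #(B ∩ C) := fun C hC ↦
      (h𝒢.inter A hA C hC).trans (card_le_card (inter_subset_inter_right hAB))
    simp only [SetIntersecting, forall_mem_insert]
    refine ⟨⟨?_, hB'⟩, fun C hC ↦ ⟨inter_comm B C ▸ hB' C hC, h𝒢.inter C hC⟩⟩
    rw [inter_self]
    exact (h𝒢.lt_card A hA).le.trans (card_le_card hAB)
  have h_weight : weight w (insert B 𝒢) = w #Bᶜ + weight w 𝒢 := sum_insert hB
  exact (h𝒢.weight_le _ h_inter).not_gt (h_weight ▸ lt_add_of_pos_left _ (hw _))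

end Extremal

section Boundary

variable {α : Type*} [Fintype α] [LinearOrder α] [LocallyFiniteOrderBot α] {t : ℕ} {s : α}
  {𝒢 ℬ 𝒞 : Finset (Finset α)}

/-- The subsets of `Iio s` that are not in the family but enter it when `s` is added to them. -/
def boundary (𝒢 : Finset (Finset α)) (s : α) : Finset (Finset α) :=
  univ.filter fun E ↦ E ⊆ Iio s ∧ insert s E ∈ 𝒢 ∧ E ∉ 𝒢

lemma mem_boundary {E : Finset α} :
    E ∈ boundary 𝒢 s ↔ E ⊆ Iio s ∧ insert s E ∈ 𝒢 ∧ E ∉ 𝒢 :=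
  mem_filter_univ E

lemma notMem_of_mem_boundary {E : Finset α} (hE : E ∈ boundary 𝒢 s) : s ∉ E := fun h ↦
  (mem_Iio.1 ((mem_boundary.1 hE).1 h)).false

lemma disjoint_Ioi_of_mem_boundary [LocallyFiniteOrderTop α] {E : Finset α}
    (hE : E ∈ boundary 𝒢 s) : Disjoint E (Ioi s) :=
  disjoint_left.2 fun _ hx hx' ↦
    (mem_Iio.1 ((mem_boundary.1 hE).1 hx)).asymm (mem_Ioi.1 hx')

lemma SetIntersecting.le_card_inter_of_mem_boundary (h𝒢 : SetIntersecting t 𝒢) {E A : Finset α}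
    (hE : E ∈ boundary 𝒢 s) (hA : A ∈ 𝒢) (hAs : A.erase s ⊆ Iio s)
    (h : s ∈ A → A.erase s ∈ boundary 𝒢 s → t ≤ #(E ∩ A.erase s)) : t ≤ #(E ∩ A) := by
  have h_insert := h𝒢 _ (mem_boundary.1 hE).2.1
  by_cases hs : s ∈ A
  · refine le_trans ?_ (card_le_card (inter_subset_inter_left (erase_subset s A)))
    by_cases hA' : A.erase s ∈ 𝒢
    · simpa only [insert_inter_of_notMem (notMem_erase s A)] using h_insert _ hA'
    · exact h hs (mem_boundary.2 ⟨hAs, (insert_erase hs).symm ▸ hA, hA'⟩)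
  · simpa only [insert_inter_of_notMem hs] using h_insert A hA

variable [LocallyFiniteOrderTop α]

/-- The family obtained by removing `s` from the sets over `ℬ` and discarding the sets over `𝒞`
that contain `s`, where `ℬ` and `𝒞` are families of subsets of `Iio s` and a set lies over its
intersection with `Iio s`. -/
def pushFamily (𝒢 : Finset (Finset α)) (s : α) (ℬ 𝒞 : Finset (Finset α)) : Finset (Finset α) :=
  (𝒢 \ cylinder (Ioi s) (𝒞.image (insert s))) ∪ cylinder (Ioi s) ℬ

lemma SetIntersecting.pushFamily (h𝒢 : SetIntersecting t 𝒢) (hs : ∀ A ∈ 𝒢, A \ Ioi s ∈ 𝒢)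
    (hℬ : ℬ ⊆ boundary 𝒢 s) (hℬ_int : SetIntersecting t ℬ)
    (hℬ𝒞 : ∀ E ∈ ℬ, ∀ E' ∈ boundary 𝒢 s \ 𝒞, t ≤ #(E ∩ E')) :
    SetIntersecting t (pushFamily 𝒢 s ℬ 𝒞) := by
  have h_mono {A B : Finset α} (h : t ≤ #(A \ Ioi s ∩ (B \ Ioi s))) : t ≤ #(A ∩ B) :=
    h.trans (card_le_card (inter_subset_inter sdiff_subset sdiff_subset))
  have h_new_old {A B : Finset α} (hA : A ∈ cylinder (Ioi s) ℬ)
      (hB : B ∈ 𝒢 \ cylinder (Ioi s) (𝒞.image (insert s))) : t ≤ #(A ∩ B) := by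
    rw [mem_sdiff, mem_cylinder] at hB
    rw [mem_cylinder] at hA
    refine h_mono (h𝒢.le_card_inter_of_mem_boundary (hℬ hA) (hs B hB.1) ?_ fun hsB hD ↦ ?_)
    · intro x hx
      simp only [mem_erase, mem_sdiff, mem_Ioi, not_lt] at hx
      exact mem_Iio.2 (hx.2.2.lt_of_ne hx.1)
    · exact hℬ𝒞 _ hA _ (mem_sdiff.2
        ⟨hD, fun hD𝒞 ↦ hB.2 (mem_image.2 ⟨_, hD𝒞, insert_erase hsB⟩)⟩)
  intro A hA B hB
  obtain hA | hA := mem_union.1 hA <;> obtain hB | hB := mem_union.1 hB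
  · exact h𝒢 A (mem_sdiff.1 hA).1 B (mem_sdiff.1 hB).1
  · exact inter_comm A B ▸ h_new_old hB hA
  · exact h_new_old hA hB
  · exact h_mono (hℬ_int _ (mem_cylinder.1 hA) _ (mem_cylinder.1 hB))

lemma compl_insert_union_Ioi (s : α) (E : Finset α) : (insert s E ∪ Ioi s)ᶜ = Iio s \ E := by
  grind [mem_compl]

lemma compl_union_Ioi {E : Finset α} (hs : s ∉ E) : (E ∪ Ioi s)ᶜ = insert s (Iio s \ E) := by
  grind [mem_compl]

lemma weight_cylinder_of_subset_boundary {M : Type*} [AddCommMonoid M] (w : ℕ → M)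
    (hℬ : ℬ ⊆ boundary 𝒢 s) :
    weight w (cylinder (Ioi s) ℬ) = ∑ E ∈ ℬ, binomialSum w #(Ioi s) (#(Iio s \ E) + 1) := by
  rw [weight_cylinder w fun E hE ↦ disjoint_Ioi_of_mem_boundary (hℬ hE)]
  refine sum_congr rfl fun E hE ↦ ?_
  rw [compl_union_Ioi (notMem_of_mem_boundary (hℬ hE)), card_insert_of_notMem (by simp)]

lemma weight_cylinder_image_insert {M : Type*} [AddCommMonoid M] (w : ℕ → M)
    (h𝒞 : 𝒞 ⊆ boundary 𝒢 s) :
    weight w (cylinder (Ioi s) (𝒞.image (insert s))) =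
      ∑ E ∈ 𝒞, binomialSum w #(Ioi s) #(Iio s \ E) := by
  have h_inj : Set.InjOn (insert s) (𝒞 : Set (Finset α)) := fun E hE E' hE' h ↦ by
    rw [← erase_insert (notMem_of_mem_boundary (h𝒞 hE)), h,
      erase_insert (notMem_of_mem_boundary (h𝒞 hE'))]
  have h_disj : ∀ E ∈ 𝒞.image (insert s), Disjoint E (Ioi s) :=
    forall_mem_image.2 fun E hE ↦
      disjoint_insert_left.2 ⟨by simp, disjoint_Ioi_of_mem_boundary (h𝒞 hE)⟩
  simp only [weight_cylinder w h_disj, sum_image h_inj, compl_insert_union_Ioi]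

lemma weight_pushFamily {M : Type*} [AddCommMonoid M] (w : ℕ → M)
    (hs : ∀ A, A \ Ioi s ∈ 𝒢 ↔ A ∈ 𝒢) (hℬ : ℬ ⊆ boundary 𝒢 s) (h𝒞 : 𝒞 ⊆ boundary 𝒢 s) :
    weight w (pushFamily 𝒢 s ℬ 𝒞) + ∑ E ∈ 𝒞, binomialSum w #(Ioi s) #(Iio s \ E) =
      weight w 𝒢 + ∑ E ∈ ℬ, binomialSum w #(Ioi s) (#(Iio s \ E) + 1) := by
  have h_sub : cylinder (Ioi s) (𝒞.image (insert s)) ⊆ 𝒢 := fun A hA ↦ by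
    obtain ⟨E, hE, hEA⟩ := mem_image.1 (mem_cylinder.1 hA)
    exact (hs A).1 (hEA ▸ (mem_boundary.1 (h𝒞 hE)).2.1)
  have h_disj : Disjoint (𝒢 \ cylinder (Ioi s) (𝒞.image (insert s))) (cylinder (Ioi s) ℬ) :=
    disjoint_left.2 fun A hA hA' ↦
      (mem_boundary.1 (hℬ (mem_cylinder.1 hA'))).2.2 ((hs A).2 (mem_sdiff.1 hA).1)
  rw [← weight_cylinder_of_subset_boundary w hℬ, ← weight_cylinder_image_insert w h𝒞, pushFamily]
  simp only [weight]
  rw [sum_union h_disj, add_right_comm, sum_sdiff h_sub]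

end Boundary

/-- The inequalities on a weight under which pushing a `t`-intersecting family of sets on `n`
points towards smaller sets is profitable. -/
structure IsPushWeight {M : Type*} [AddCommMonoid M] [LT M] (n t : ℕ) (w : ℕ → M) : Prop where
  pos : ∀ m, 0 < w m
  lt_succ : ∀ r m, 1 ≤ m → binomialSum w r m < binomialSum w r (m + 1)
  middle : ∀ r m e, 1 ≤ m → e + 1 = m + t → e + m + 1 + r = n →
    e • binomialSum w r m < m • binomialSum w r (m + 1)

namespace IsExtremalFamily

variable {α M : Type*} [Fintype α] [LinearOrder α] [LocallyFiniteOrderBot α] [AddCommMonoid M]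
  [LinearOrder M] {w : ℕ → M} {t : ℕ} {s : α} {𝒢 ℬ 𝒞 : Finset (Finset α)}

lemma le_card_of_mem_boundary (h𝒢 : IsExtremalFamily w t 𝒢) {E : Finset α}
    (hE : E ∈ boundary 𝒢 s) : t ≤ #E := by
  have h := h𝒢.lt_card _ (mem_boundary.1 hE).2.1
  rw [card_insert_of_notMem (notMem_of_mem_boundary hE)] at h
  exact Nat.le_of_lt_succ h

lemma le_card_inter_of_notMem (h𝒢 : IsExtremalFamily w t 𝒢) {E E' : Finset α}
    (hE : E ∈ boundary 𝒢 s) (hE' : E' ∈ boundary 𝒢 s) {x : α} (hxs : x < s) (hx : x ∉ E)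
    (hx' : x ∉ E') : t ≤ #(E ∩ E') := by
  have h_shift := h𝒢.shift_mem x s hxs _ (mem_boundary.1 hE).2.1 (by simp [hxs.ne, hx]) (by simp)
  rw [erase_insert (notMem_of_mem_boundary hE)] at h_shift
  have h := h𝒢.inter _ h_shift _ (mem_boundary.1 hE').2.1
  rwa [insert_inter_of_notMem (by simp [hxs.ne, hx']),
    inter_insert_of_notMem (notMem_of_mem_boundary hE)] at h

lemma le_card_inter_of_card_add_card_ne (h𝒢 : IsExtremalFamily w t 𝒢) {E E' : Finset α}
    (hE : E ∈ boundary 𝒢 s) (hE' : E' ∈ boundary 𝒢 s)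
    (h : #(Iio s \ E) + #(Iio s \ E') + t ≠ #(Iio s) + 1) : t ≤ #(E ∩ E') := by
  obtain ⟨x, hx⟩ | h_empty := (Iio s \ (E ∪ E')).eq_empty_or_nonempty.symm
  · simp only [mem_sdiff, mem_Iio, mem_union, not_or] at hx
    exact h𝒢.le_card_inter_of_notMem hE hE' hx.1 hx.2.1 hx.2.2
  have h_union : E ∪ E' = Iio s :=
    (union_subset (mem_boundary.1 hE).1 (mem_boundary.1 hE').1).antisymm
      (sdiff_eq_empty_iff_subset.1 h_empty)
  have h_insert := h𝒢.inter _ (mem_boundary.1 hE).2.1 _ (mem_boundary.1 hE').2.1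
  rw [← insert_inter_distrib,
    card_insert_of_notMem fun hs ↦ notMem_of_mem_boundary hE (mem_inter.1 hs).1] at h_insert
  have := card_union_add_card_inter E E'
  have := card_sdiff_add_card_eq_card (mem_boundary.1 hE).1
  have := card_sdiff_add_card_eq_card (mem_boundary.1 hE').1
  rw [h_union] at *
  omega

variable [IsOrderedCancelAddMonoid M] [LocallyFiniteOrderTop α]

lemma sum_le_sum_of_push (h𝒢 : IsExtremalFamily w t 𝒢) (hw : ∀ m, 0 < w m)
    (hs : ∀ A ∈ 𝒢, A \ Ioi s ∈ 𝒢) (hℬ : ℬ ⊆ boundary 𝒢 s) (h𝒞 : 𝒞 ⊆ boundary 𝒢 s)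
    (hℬ_int : SetIntersecting t ℬ)
    (hℬ𝒞 : ∀ E ∈ ℬ, ∀ E' ∈ boundary 𝒢 s \ 𝒞, t ≤ #(E ∩ E')) :
    ∑ E ∈ ℬ, binomialSum w #(Ioi s) (#(Iio s \ E) + 1) ≤
      ∑ E ∈ 𝒞, binomialSum w #(Ioi s) #(Iio s \ E) := by
  have h_weight := weight_pushFamily w
    (fun A ↦ ⟨fun hA ↦ h𝒢.mem_of_subset hw hA sdiff_subset, hs A⟩) hℬ h𝒞
  have h_max := h𝒢.weight_le _ (h𝒢.inter.pushFamily hs hℬ hℬ_int hℬ𝒞)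
  exact le_of_add_le_add_left (h_weight.symm.le.trans (by gcongr))

lemma Iio_notMem_boundary (h𝒢 : IsExtremalFamily w t 𝒢) (hw : ∀ m, 0 < w m)
    (hs : ∀ A ∈ 𝒢, A \ Ioi s ∈ 𝒢) : Iio s ∉ boundary 𝒢 s := by
  intro h_mem
  have h_inter : ∀ E ∈ boundary 𝒢 s, t ≤ #(Iio s ∩ E) := fun E hE ↦ by
    rw [inter_eq_right.2 (mem_boundary.1 hE).1]
    exact h𝒢.le_card_of_mem_boundary hE
  have h_le := h𝒢.sum_le_sum_of_push (ℬ := {Iio s}) (𝒞 := ∅) hw hs (by simpa) (by simp)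
    (by simpa [SetIntersecting] using h_inter _ h_mem) (by simpa using h_inter)
  rw [sum_singleton, sum_empty] at h_le
  exact h_le.not_gt (binomialSum_pos hw _ _)

lemma card_Iio_sdiff_pos (h𝒢 : IsExtremalFamily w t 𝒢) (hw : ∀ m, 0 < w m)
    (hs : ∀ A ∈ 𝒢, A \ Ioi s ∈ 𝒢) {E : Finset α} (hE : E ∈ boundary 𝒢 s) : 0 < #(Iio s \ E) :=
  card_pos.2 <| sdiff_nonempty.2 fun h ↦
    h𝒢.Iio_notMem_boundary hw hs (h.antisymm (mem_boundary.1 hE).1 ▸ hE)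

lemma sum_level_le (h𝒢 : IsExtremalFamily w t 𝒢) (hw : ∀ m, 0 < w m)
    (hs : ∀ A ∈ 𝒢, A \ Ioi s ∈ 𝒢) {m m' : ℕ} (hm : m + m' + t = #(Iio s) + 1) (hne : m ≠ m') :
    #{E ∈ boundary 𝒢 s | #(Iio s \ E) = m} • binomialSum w #(Ioi s) (m + 1) ≤
      #{E ∈ boundary 𝒢 s | #(Iio s \ E) = m'} • binomialSum w #(Ioi s) m' := by
  have h_le := h𝒢.sum_le_sum_of_push (ℬ := {E ∈ boundary 𝒢 s | #(Iio s \ E) = m})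
    (𝒞 := {E ∈ boundary 𝒢 s | #(Iio s \ E) = m'}) hw hs (filter_subset _ _) (filter_subset _ _)
    (fun E hE E' hE' ↦ ?_) (fun E hE E' hE' ↦ ?_)
  · rwa [sum_eq_card_nsmul fun E hE ↦ by rw [(mem_filter.1 hE).2],
      sum_eq_card_nsmul fun E hE ↦ by rw [(mem_filter.1 hE).2]] at h_le
  · rw [mem_filter] at hE hE'
    exact h𝒢.le_card_inter_of_card_add_card_ne hE.1 hE'.1 (by omega)
  · simp only [mem_sdiff, mem_filter, not_and] at hE hE'
    have := hE'.2 hE'.1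
    exact h𝒢.le_card_inter_of_card_add_card_ne hE.1 hE'.1 (by omega)

lemma two_mul_card_add_eq {n : ℕ} (h𝒢 : IsExtremalFamily w t 𝒢) (hw : IsPushWeight n t w)
    (hs : ∀ A ∈ 𝒢, A \ Ioi s ∈ 𝒢) {E : Finset α} (hE : E ∈ boundary 𝒢 s) :
    2 * #(Iio s \ E) + t = #(Iio s) + 1 := by
  by_contra h_ne
  have h_card := card_sdiff_add_card_eq_card (mem_boundary.1 hE).1
  have ht := h𝒢.le_card_of_mem_boundary hE
  have h_pos := h𝒢.card_Iio_sdiff_pos hw.pos hs hE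
  obtain ⟨m, hm⟩ : ∃ m, m = #(Iio s \ E) := ⟨_, rfl⟩
  obtain ⟨m', hm'⟩ : ∃ m', m + m' + t = #(Iio s) + 1 := ⟨#(Iio s) + 1 - m - t, by omega⟩
  have h_card_pos : 0 < #{E ∈ boundary 𝒢 s | #(Iio s \ E) = m} :=
    card_pos.2 ⟨E, mem_filter.2 ⟨hE, hm.symm⟩⟩
  have h₁ := h𝒢.sum_level_le hw.pos hs hm' (by omega)
  have h₂ := h𝒢.sum_level_le hw.pos hs (m := m') (m' := m) (by omega) (by omega)
  have h₃ := nsmul_lt_nsmul_right h_card_pos.ne' (hw.lt_succ #(Ioi s) m (by omega))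
  have h₄ := nsmul_le_nsmul_right (hw.lt_succ #(Ioi s) m' (by omega)).le
    #{E ∈ boundary 𝒢 s | #(Iio s \ E) = m'}
  exact (h₃.trans_le (h₁.trans (h₄.trans h₂))).false

lemma sum_filter_notMem_le (h𝒢 : IsExtremalFamily w t 𝒢) (hw : ∀ m, 0 < w m)
    (hs : ∀ A ∈ 𝒢, A \ Ioi s ∈ 𝒢) {x : α} (hx : x < s) :
    ∑ E ∈ boundary 𝒢 s with x ∉ E, binomialSum w #(Ioi s) (#(Iio s \ E) + 1) ≤
      ∑ E ∈ boundary 𝒢 s with x ∈ E, binomialSum w #(Ioi s) #(Iio s \ E) := by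
  refine h𝒢.sum_le_sum_of_push hw hs (filter_subset _ _) (filter_subset _ _)
    (fun E hE E' hE' ↦ ?_) (fun E hE E' hE' ↦ ?_)
  · rw [mem_filter] at hE hE'
    exact h𝒢.le_card_inter_of_notMem hE.1 hE'.1 hx hE.2 hE'.2
  · rw [mem_filter] at hE
    rw [mem_sdiff, mem_filter, not_and] at hE'
    exact h𝒢.le_card_inter_of_notMem hE.1 hE'.1 hx hE.2 (hE'.2 hE'.1)

lemma boundary_eq_empty (h𝒢 : IsExtremalFamily w t 𝒢) (hw : IsPushWeight (Fintype.card α) t w)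
    (hs : ∀ A ∈ 𝒢, A \ Ioi s ∈ 𝒢) : boundary 𝒢 s = ∅ := by
  by_contra h_ne
  have h_sum := sum_le_sum fun x (hx : x ∈ Iio s) ↦
    h𝒢.sum_filter_notMem_le hw.pos hs (mem_Iio.1 hx)
  rw [sum_comm' (s' := fun E ↦ Iio s \ E) (t' := boundary 𝒢 s) (by simp; tauto),
    sum_comm' (s' := fun E ↦ E) (t' := boundary 𝒢 s) fun x E ↦ by
      rw [mem_filter]
      exact ⟨fun h ↦ ⟨h.2.2, h.2.1⟩, fun h ↦ ⟨(mem_boundary.1 h.2).1 h.1, h.2, h.1⟩⟩] at h_sum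
  simp only [sum_const] at h_sum
  refine h_sum.not_gt (sum_lt_sum_of_nonempty (nonempty_iff_ne_empty.2 h_ne) fun E hE ↦ ?_)
  have h_level := h𝒢.two_mul_card_add_eq hw hs hE
  have h_card := card_sdiff_add_card_eq_card (mem_boundary.1 hE).1
  have h_univ : #(Iio s) + 1 + #(Ioi s) = Fintype.card α := by
    have h := card_add_card_compl (∅ ∪ Ioi s)
    rw [compl_union_Ioi (notMem_empty s), card_insert_of_notMem (by simp), empty_union,
      sdiff_empty] at h
    omega
  exact hw.middle _ _ _ (h𝒢.card_Iio_sdiff_pos hw.pos hs hE) (by omega) (by omega)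

lemma erase_mem (h𝒢 : IsExtremalFamily w t 𝒢) (hw : IsPushWeight (Fintype.card α) t w) (s : α) :
    ∀ A ∈ 𝒢, A.erase s ∈ 𝒢 := by
  induction s using WellFoundedGT.induction with
  | ind s ih =>
    intro A hA
    have hs : ∀ A ∈ 𝒢, A \ Ioi s ∈ 𝒢 := fun A ↦
      sdiff_mem_of_forall_erase_mem fun u hu ↦ ih u (mem_Ioi.1 hu)
    by_cases hsA : s ∈ A
    · have h_insert : insert s (A.erase s \ Ioi s) ∈ 𝒢 := by
        rw [← insert_sdiff_of_notMem _ (by simp), insert_erase hsA]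
        exact hs A hA
      by_contra hA'
      have h_erase : A.erase s \ Ioi s ∉ 𝒢 := fun h ↦ hA' (h𝒢.mem_of_subset hw.pos h sdiff_subset)
      have h_sub : A.erase s \ Ioi s ⊆ Iio s := by
        grind
      have h_mem := mem_boundary.2 ⟨h_sub, h_insert, h_erase⟩
      simp [h𝒢.boundary_eq_empty hw hs] at h_mem
    · rwa [erase_eq_of_notMem hsA]

end IsExtremalFamily

theorem IsPushWeight.exists_card_le {α M : Type*} [Fintype α] [LinearOrder α]
    [LocallyFiniteOrderBot α] [LocallyFiniteOrderTop α] [AddCommMonoid M] [LinearOrder M]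
    [IsOrderedCancelAddMonoid M] {w : ℕ → M} {t : ℕ} {𝒢 : Finset (Finset α)}
    (hw : IsPushWeight (Fintype.card α) t w) (h_ne : 𝒢.Nonempty) (h𝒢 : SetIntersecting t 𝒢)
    (h_max : ∀ ℋ : Finset (Finset α), SetIntersecting t ℋ → weight w ℋ ≤ weight w 𝒢) :
    ∃ A ∈ 𝒢, #A ≤ t := by
  by_contra! h_card
  obtain ⟨ℋ, hℋ⟩ := exists_isExtremalFamily h_ne h𝒢 h_card h_max
  obtain ⟨A, hA⟩ := hℋ.nonempty
  have h_empty := sdiff_mem_of_forall_erase_mem (fun u (_ : u ∈ A) ↦ hℋ.erase_mem hw u) hA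
  rw [sdiff_self] at h_empty
  exact absurd (hℋ.lt_card _ h_empty) (by simp)

section DerangementWeight

lemma numDerangements_pos : ∀ {m : ℕ}, m ≠ 1 → 0 < numDerangements m
  | 0, _ => by simp
  | m + 2, _ => by
    rw [numDerangements_add_two]
    obtain rfl | hm := eq_or_ne m 1
    · simp [numDerangements_add_two]
    · have := numDerangements_pos hm
      positivity

lemma binomialSum_numDerangements_add_two (r m : ℕ) :
    binomialSum numDerangements r (m + 2) =
      (m + 1 + r) * binomialSum numDerangements r (m + 1) +
        (m + 1) * binomialSum numDerangements r m := by
  induction r generalizing m with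
  | zero =>
    simp only [binomialSum, numDerangements_add_two]
    ring
  | succ r ih =>
    simp only [binomialSum, ih m, ih (m + 1)]
    ring

lemma binomialSum_numDerangements_zero_and_one (r : ℕ) :
    binomialSum numDerangements r 0 = r.factorial ∧
      binomialSum numDerangements r 1 = r * r.factorial := by
  induction r with
  | zero => simp [binomialSum]
  | succ r ih =>
    simp only [binomialSum, binomialSum_numDerangements_add_two, ih, Nat.factorial_succ]
    constructor <;> ring

lemma binomialSum_numDerangements_pos {r m : ℕ} (h : m ≠ 1 ∨ r ≠ 0) :
    0 < binomialSum numDerangements r m := by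
  induction r generalizing m with
  | zero => exact numDerangements_pos (by simpa using h)
  | succ r ih =>
    obtain rfl | hm := eq_or_ne m 1
    · exact Nat.add_pos_right _ (ih (by simp))
    · exact Nat.add_pos_left (ih (.inl hm)) _

lemma binomialSum_numDerangements_lt_succ {r m : ℕ} (hm : 1 ≤ m) :
    binomialSum numDerangements r m < binomialSum numDerangements r (m + 1) := by
  obtain ⟨k, rfl⟩ := Nat.exists_eq_add_of_le' hm
  rw [binomialSum_numDerangements_add_two]
  obtain rfl | hk := eq_or_ne k 1
  · have := binomialSum_numDerangements_pos (r := r) (m := 2) (by simp)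
    nlinarith
  · have := binomialSum_numDerangements_pos (r := r) (.inl hk)
    nlinarith

lemma mul_binomialSum_numDerangements_lt {r m e : ℕ} (hm : 1 ≤ m) (he : e + 2 ≤ 3 * m + r)
    (h : m ≠ 2 ∨ r ≠ 0) :
    e * binomialSum numDerangements r m < m * binomialSum numDerangements r (m + 1) := by
  obtain ⟨k, rfl⟩ := Nat.exists_eq_add_of_le' hm
  have h_pos : 0 < binomialSum numDerangements r k :=
    binomialSum_numDerangements_pos (h.imp_left fun hk ↦ by omega)
  have h_coeff : e ≤ (k + 1) * (k + 1 + r) := by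
    nlinarith [Nat.le_mul_self k]
  calc e * binomialSum numDerangements r (k + 1)
      ≤ (k + 1) * (k + 1 + r) * binomialSum numDerangements r (k + 1) := by gcongr
    _ < (k + 1) * (k + 1 + r) * binomialSum numDerangements r (k + 1) +
        (k + 1) * (k + 1) * binomialSum numDerangements r k := by
      exact Nat.lt_add_of_pos_right (by positivity)
    _ = (k + 1) * binomialSum numDerangements r (k + 1 + 1) := by
      rw [binomialSum_numDerangements_add_two]
      ring

/-- A secondary weight, used to break ties between families whose derangement counts agree. The sets
with `t` elements (those missing `m = n - t` points) get a penalty exceeding the total `4 ^ n` of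
`3 ^ m` over all the other sets. The base `3` wins the only tie in `IsPushWeight.middle`, which
occurs for `t = 3` and `n = 7`. -/
def tieWeight (n t m : ℕ) : ℤ :=
  if m + t = n then -4 ^ n else 3 ^ m

/-- The number of derangements of `m` points, with ties resolved by `tieWeight`. -/
def derangementWeight (n t m : ℕ) : ℕ ×ₗ ℤ :=
  toLex (numDerangements m, tieWeight n t m)

lemma binomialSum_derangementWeight (n t r m : ℕ) :
    binomialSum (derangementWeight n t) r m =
      toLex (binomialSum numDerangements r m, binomialSum (tieWeight n t) r m) :=
  binomialSum_toLex _ _ r m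

lemma weight_derangementWeight {n t : ℕ} (𝒢 : Finset (Finset (Fin n))) :
    weight (derangementWeight n t) 𝒢 =
      toLex (weight numDerangements 𝒢, weight (tieWeight n t) 𝒢) :=
  weight_toLex _ _ 𝒢

lemma isPushWeight_derangementWeight {n t : ℕ} (ht : 0 < t) (hn : 2 * t + 1 ≤ n) :
    IsPushWeight n t (derangementWeight n t) where
  pos m := by
    obtain rfl | hm := eq_or_ne m 1
    · refine Prod.Lex.toLex_lt_toLex.2 (.inr ⟨by simp, ?_⟩)
      simp [tieWeight, show 1 + t ≠ n by omega]
    · exact Prod.Lex.toLex_lt_toLex.2 (.inl (numDerangements_pos hm))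
  lt_succ r m hm := by
    rw [binomialSum_derangementWeight, binomialSum_derangementWeight]
    exact Prod.Lex.toLex_lt_toLex.2 (.inl (binomialSum_numDerangements_lt_succ hm))
  middle r m e hm he hen := by
    rw [binomialSum_derangementWeight, binomialSum_derangementWeight]
    change toLex (e * binomialSum numDerangements r m, e • binomialSum (tieWeight n t) r m) <
      toLex (m * binomialSum numDerangements r (m + 1), m • binomialSum (tieWeight n t) r (m + 1))
    rw [Prod.Lex.toLex_lt_toLex]
    by_cases h : m ≠ 2 ∨ r ≠ 0
    · exact .inl (mul_binomialSum_numDerangements_lt hm (by omega) h)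
    obtain ⟨rfl, rfl⟩ : m = 2 ∧ r = 0 := by tauto
    simp only [binomialSum, numDerangements_add_two, numDerangements_one, numDerangements_zero,
      zero_add]
    obtain he₄ | rfl : e < 4 ∨ e = 4 := by omega
    · left
      omega
    · obtain ⟨rfl, rfl⟩ : t = 3 ∧ n = 7 := by omega
      simp [tieWeight]

lemma weight_tieWeight_neg {n t : ℕ} {𝒢 : Finset (Finset (Fin n))} {T : Finset (Fin n)}
    (hT : T ∈ 𝒢) (hTt : #T = t) (h𝒢 : ∀ A ∈ 𝒢, T ⊆ A) : weight (tieWeight n t) 𝒢 < 0 := by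
  have hT_weight : tieWeight n t #Tᶜ = -4 ^ n := by
    rw [tieWeight, if_pos]
    rw [← hTt, card_compl_add_card, Fintype.card_fin]
  have h_weight : ∀ A ∈ 𝒢.erase T, tieWeight n t #Aᶜ = 3 ^ #Aᶜ := fun A hA ↦ by
    obtain ⟨hne, hA⟩ := mem_erase.1 hA
    have := card_lt_card ((h𝒢 A hA).ssubset_of_ne hne.symm)
    have := card_add_card_compl A
    rw [Fintype.card_fin] at this
    rw [tieWeight, if_neg (by omega)]
  have h_total : ∑ A : Finset (Fin n), (3 : ℤ) ^ #Aᶜ = 4 ^ n := by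
    have h := Fintype.sum_pow_mul_eq_add_pow (Fin n) (1 : ℤ) 3
    simpa [card_compl] using h
  have h_lt : ∑ A ∈ 𝒢.erase T, (3 : ℤ) ^ #Aᶜ < ∑ A : Finset (Fin n), (3 : ℤ) ^ #Aᶜ :=
    sum_lt_sum_of_subset (subset_univ _) (mem_univ T) (notMem_erase T 𝒢) (by positivity)
      fun _ _ _ ↦ by positivity
  rw [weight, ← add_sum_erase _ _ hT, hT_weight, sum_congr rfl h_weight]
  linarith

lemma weight_tieWeight_nonneg {n t : ℕ} {𝒢 : Finset (Finset (Fin n))} (h𝒢 : ∀ A ∈ 𝒢, #A ≠ t) :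
    0 ≤ weight (tieWeight n t) 𝒢 := by
  refine sum_nonneg fun A hA ↦ ?_
  have h_card := card_add_card_compl A
  rw [Fintype.card_fin] at h_card
  have := h𝒢 A hA
  rw [tieWeight, if_neg (by omega)]
  positivity

namespace SetIntersecting

variable {n t : ℕ} {𝒢 : Finset (Finset (Fin n))}

lemma weight_numDerangements_le_of_card_le (h𝒢 : SetIntersecting t 𝒢)
    {T : Finset (Fin n)} (hT : T ∈ 𝒢) (hTt : #T ≤ t) :
    weight numDerangements 𝒢 ≤ (n - t).factorial := by
  have hT_card : #T = t := hTt.antisymm (by simpa using h𝒢 T hT T hT)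
  calc weight numDerangements 𝒢
      ≤ ∑ A ∈ Icc T univ, numDerangements #Aᶜ := by
        refine sum_le_sum_of_subset fun A hA ↦ ?_
        exact mem_Icc.2 ⟨h𝒢.subset_of_card_le hT hTt hA, subset_univ A⟩
    _ = (n - t).factorial := by
        rw [sum_Icc_card_compl _ (subset_univ T), compl_univ, card_empty,
          (binomialSum_numDerangements_zero_and_one _).1, card_univ_sdiff, Fintype.card_fin,
          hT_card]

lemma weight_numDerangements_lt (ht : 0 < t) (hn : 2 * t + 1 ≤ n) (h𝒢 : SetIntersecting t 𝒢)
    (h_card : ∀ A ∈ 𝒢, t < #A) : weight numDerangements 𝒢 < (n - t).factorial := by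
  by_contra! h_ge
  obtain ⟨ℋ, hℋ, h_max⟩ := Set.exists_max_image {ℋ : Finset (Finset (Fin n)) | SetIntersecting t ℋ}
    (weight (derangementWeight n t)) (Set.toFinite _) ⟨𝒢, h𝒢⟩
  have h_le := h_max 𝒢 h𝒢
  rw [weight_derangementWeight, weight_derangementWeight] at h_le
  have h_fst : (n - t).factorial ≤ weight numDerangements ℋ :=
    h_ge.trans (Prod.Lex.monotone_fst _ _ h_le)
  have h_ne : ℋ.Nonempty :=
    nonempty_of_sum_ne_zero ((Nat.factorial_pos (n - t)).trans_le h_fst).ne'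
  obtain ⟨T, hT, hTt⟩ := IsPushWeight.exists_card_le
    ((Fintype.card_fin n).symm ▸ isPushWeight_derangementWeight ht hn) h_ne hℋ h_max
  have hT_card : #T = t := hTt.antisymm (by simpa using hℋ T hT T hT)
  have h_fst_le := hℋ.weight_numDerangements_le_of_card_le hT hTt
  have h_neg := weight_tieWeight_neg hT hT_card fun A ↦ hℋ.subset_of_card_le hT hTt
  have h_nonneg := weight_tieWeight_nonneg fun A hA ↦ (h_card A hA).ne'
  rw [Prod.Lex.toLex_le_toLex] at h_le
  dsimp only at h_le
  omega

lemma weight_numDerangements_le (ht : 0 < t) (hn : 2 * t + 1 ≤ n) (h𝒢 : SetIntersecting t 𝒢) :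
    weight numDerangements 𝒢 ≤ (n - t).factorial := by
  by_cases h_card : ∀ A ∈ 𝒢, t < #A
  · exact (h𝒢.weight_numDerangements_lt ht hn h_card).le
  · push Not at h_card
    obtain ⟨T, hT, hTt⟩ := h_card
    exact h𝒢.weight_numDerangements_le_of_card_le hT hTt

lemma exists_forall_subset_of_weight_eq (ht : 0 < t) (hn : 2 * t + 1 ≤ n)
    (h𝒢 : SetIntersecting t 𝒢) (h_weight : weight numDerangements 𝒢 = (n - t).factorial) :
    ∃ T : Finset (Fin n), #T = t ∧ ∀ A ∈ 𝒢, T ⊆ A := by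
  obtain ⟨T, hT, hTt⟩ : ∃ T ∈ 𝒢, #T ≤ t := by
    by_contra! h_card
    exact (h𝒢.weight_numDerangements_lt ht hn h_card).ne h_weight
  exact ⟨T, hTt.antisymm (by simpa using h𝒢 T hT T hT), fun A ↦ h𝒢.subset_of_card_le hT hTt⟩

end SetIntersecting

end DerangementWeight

section CommonCycle

lemma isCycleOn_of_eqOn {α : Type*} {σ π : Perm α} {B : Finset α} (h : σ.IsCycleOn B)
    (h_eq : Set.EqOn σ π B) : π.IsCycleOn B := by
  refine ⟨h.1.congr h_eq, fun x hx y hy ↦ ?_⟩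
  obtain ⟨k, -, rfl⟩ := h.exists_pow_eq hx hy
  have h_pow : (π ^ k) x = (σ ^ k) x := by
    clear hy
    induction k with
    | zero => rfl
    | succ k ih =>
      rw [pow_succ', pow_succ', Perm.mul_apply, Perm.mul_apply, ih]
      exact (h_eq ((h.1.perm_pow k).mapsTo hx)).symm
  exact ⟨k, by rw [zpow_natCast, h_pow]⟩

variable {n t : ℕ} {σ π σ' π' : Perm (Fin n)} {B : Finset (Fin n)}

lemma isCommonCycle_iff : IsCommonCycle σ π B ↔ B.Nonempty ∧ σ.IsCycleOn B ∧ Set.EqOn σ π B := by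
  constructor
  · rintro ⟨h_ne, hσ, -, h_eq, h_cycle⟩
    exact ⟨h_ne, ⟨(B.finite_toSet.injOn_iff_bijOn_of_mapsTo hσ).1 σ.injective.injOn, h_cycle⟩, h_eq⟩
  · rintro ⟨h_ne, hσ, h_eq⟩
    exact ⟨h_ne, hσ.1.mapsTo, hσ.1.mapsTo.congr h_eq, h_eq, hσ.2⟩

lemma IsCommonCycle.isCycleOn (h : IsCommonCycle σ π B) : σ.IsCycleOn B :=
  (isCommonCycle_iff.1 h).2.1

lemma IsCommonCycle.eqOn (h : IsCommonCycle σ π B) : Set.EqOn σ π B :=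
  (isCommonCycle_iff.1 h).2.2

lemma IsCommonCycle.symm (h : IsCommonCycle σ π B) : IsCommonCycle π σ B :=
  isCommonCycle_iff.2 ⟨h.1, isCycleOn_of_eqOn h.isCycleOn h.eqOn, h.eqOn.symm⟩

lemma IsCommonCycle.congr (h : IsCommonCycle σ π B) (hσ : Set.EqOn σ σ' B)
    (hπ : Set.EqOn π π' B) : IsCommonCycle σ' π' B :=
  isCommonCycle_iff.2 ⟨h.1, isCycleOn_of_eqOn h.isCycleOn hσ, hσ.symm.trans (h.eqOn.trans hπ)⟩

lemma isCommonCycle_singleton {x : Fin n} (hσ : σ x = x) (hπ : π x = x) :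
    IsCommonCycle σ π {x} := by
  simp [isCommonCycle_iff, hσ, hπ]

/-- The set of common cycles of two permutations. -/
def commonCycles (σ π : Perm (Fin n)) : Finset (Finset (Fin n)) :=
  univ.filter (IsCommonCycle σ π)

lemma mem_commonCycles : B ∈ commonCycles σ π ↔ IsCommonCycle σ π B :=
  mem_filter_univ B

lemma commonCycles_comm (σ π : Perm (Fin n)) : commonCycles σ π = commonCycles π σ := by
  ext B
  simp only [mem_commonCycles]
  exact ⟨.symm, .symm⟩

lemma pairwiseDisjoint_commonCycles (σ π : Perm (Fin n)) :
    (commonCycles σ π : Set (Finset (Fin n))).PairwiseDisjoint id := by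
  intro A hA B hB h_ne
  rw [mem_coe, mem_commonCycles] at hA hB
  refine disjoint_left.2 fun z hzA hzB ↦ h_ne ?_
  ext x
  rw [← mem_coe, ← mem_coe, ← hA.isCycleOn.range_zpow hzA, ← hB.isCycleOn.range_zpow hzB]

lemma tCycleIntersecting_iff {F : Set (Perm (Fin n))} :
    TCycleIntersecting t F ↔ ∀ σ ∈ F, ∀ π ∈ F, t ≤ #(commonCycles σ π) := by
  refine forall₄_congr fun σ _ π _ ↦ ⟨?_, fun h ↦ ?_⟩
  · rintro ⟨𝒞, h_card, h𝒞, -⟩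
    exact h_card.trans (card_le_card fun B hB ↦ mem_commonCycles.2 (h𝒞 B hB))
  · exact ⟨commonCycles σ π, h, fun B ↦ mem_commonCycles.1, pairwiseDisjoint_commonCycles σ π⟩

lemma card_commonCycles_le {S : Finset (Fin n)}
    (h : ∀ B, IsCommonCycle σ π B → (B ∩ S).Nonempty) : #(commonCycles σ π) ≤ #S :=
  calc #(commonCycles σ π)
      ≤ #((commonCycles σ π).biUnion (· ∩ S)) :=
        card_le_card_biUnion
          ((pairwiseDisjoint_commonCycles σ π).mono fun _ ↦ inter_subset_left)
          fun B hB ↦ h B (mem_commonCycles.1 hB)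
    _ ≤ #S := card_le_card (biUnion_subset.2 fun _ _ ↦ inter_subset_right)

lemma mem_fixSet {x : Fin n} : x ∈ fixSet σ ↔ σ x = x :=
  mem_filter_univ x

lemma card_commonCycles_le_card_fixSet_inter (h : ∀ x, σ x = π x → σ x = x) :
    #(commonCycles σ π) ≤ #(fixSet σ ∩ fixSet π) := by
  refine card_commonCycles_le fun B hB ↦ ?_
  obtain ⟨x, hx⟩ := hB.1
  have h_eq := hB.eqOn hx
  have hσx := h x h_eq
  exact ⟨x, mem_inter.2 ⟨hx, mem_inter.2 ⟨mem_fixSet.2 hσx, mem_fixSet.2 (h_eq ▸ hσx)⟩⟩⟩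

lemma card_commonCycles_lt {T : Finset (Fin n)} (hσ : σ ∉ UpSet T) (h : ∀ x ∉ T, σ x ≠ π x) :
    #(commonCycles σ π) < #T := by
  obtain ⟨z, hz, hσz⟩ : ∃ z ∈ T, σ z ≠ z := by simpa [UpSet] using hσ
  refine lt_of_le_of_lt (card_commonCycles_le fun B hB ↦ ?_) (card_erase_lt_of_mem hz)
  have hBT : B ⊆ T := fun x hx ↦ by_contra fun hxT ↦ h x hxT (hB.eqOn hx)
  obtain ⟨y, hy, hyz⟩ : ∃ y ∈ B, y ≠ z := by
    obtain ⟨x, hx⟩ := hB.1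
    obtain rfl | hxz := eq_or_ne x z
    · exact ⟨σ x, hB.2.1 x hx, hσz⟩
    · exact ⟨x, hx, hxz⟩
  exact ⟨y, mem_inter.2 ⟨hy, mem_erase.2 ⟨hyz, hBT hy⟩⟩⟩

end CommonCycle

section Count

variable {n : ℕ}

lemma card_filter_fixSet_eq (A : Finset (Fin n)) :
    #{σ : Perm (Fin n) | fixSet σ = A} = numDerangements #Aᶜ := by
  have e := Fintype.card_congr (derangements.subtypeEquiv fun x ↦ x ∉ A)
  rw [card_derangements_eq_numDerangements, Fintype.card_subtype_compl, Fintype.card_coe,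
    ← card_compl] at e
  rw [← Fintype.card_subtype, e]
  refine Fintype.card_congr (Equiv.subtypeEquivRight fun σ ↦ ?_)
  simp only [Finset.ext_iff, mem_fixSet, not_not, Function.mem_fixedPoints, Function.IsFixedPt]
  exact forall_congr' fun a ↦ iff_comm

lemma ncard_upSet (T : Finset (Fin n)) : (UpSet T).ncard = (n - #T).factorial := by
  have e := Fintype.card_congr (Equiv.Perm.subtypeEquivSubtypePerm fun x ↦ x ∉ T)
  rw [Fintype.card_perm, Fintype.card_subtype_compl, Fintype.card_coe, Fintype.card_fin] at e
  rw [e, ← Nat.card_coe_set_eq, Nat.card_eq_fintype_card]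
  exact Fintype.card_congr (Equiv.subtypeEquivRight fun σ ↦ by simp [UpSet])

lemma ncard_le_weight_image_fixSet (F : Set (Perm (Fin n))) :
    F.ncard ≤ weight numDerangements (F.toFinset.image fixSet) := by
  rw [Set.ncard_eq_toFinset_card', weight, card_eq_sum_card_image fixSet F.toFinset]
  refine sum_le_sum fun A _ ↦ ?_
  rw [← card_filter_fixSet_eq]
  exact card_le_card (filter_subset_filter _ (subset_univ _))

lemma isTPointStabilizer_iff {t : ℕ} {F : Set (Perm (Fin n))} :
    IsTPointStabilizer t F ↔ ∃ T : Finset (Fin n), #T = t ∧ F = UpSet T := by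
  constructor
  · rintro ⟨a, rfl⟩
    exact ⟨univ.map a, by simp, by simp [UpSet]⟩
  · rintro ⟨T, hT, rfl⟩
    refine ⟨(T.orderEmbOfFin hT).toEmbedding, ?_⟩
    have h_range := T.range_orderEmbOfFin hT
    simp [UpSet, ← mem_coe, ← h_range, -range_orderEmbOfFin]

end Count

section Fixing

variable {n t : ℕ} {i j : Fin n} {σ π : Perm (Fin n)} {F : Set (Perm (Fin n))}

lemma ijFix_of_ne (h : σ i ≠ j) : ijFix i j σ = σ :=
  if_neg h

lemma ijFix_of_eq (h : σ i = j) : ijFix i j σ = σ * swap i (σ⁻¹ i) :=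
  if_pos h

lemma ijFix_apply_self (h : σ i = j) : ijFix i j σ i = i := by
  simp [ijFix_of_eq h]

lemma ijFix_apply_of_apply_eq {x : Fin n} (h : σ i = j) (hx : σ x = i) : ijFix i j σ x = j := by
  rw [ijFix_of_eq h, Perm.mul_apply, ← Perm.eq_inv_iff_eq.2 hx, swap_apply_right, h]

lemma ijFix_apply_of_ne {x : Fin n} (hx : x ≠ i) (hσx : σ x ≠ i) : ijFix i j σ x = σ x := by
  by_cases h : σ i = j
  · rw [ijFix_of_eq h, Perm.mul_apply, swap_apply_of_ne_of_ne hx (mt Perm.eq_inv_iff_eq.1 hσx)]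
  · rw [ijFix_of_ne h]

lemma eqOn_ijFix {B : Finset (Fin n)} (hi : i ∉ B) (hB : ∀ x ∈ B, σ x ∈ B) :
    Set.EqOn σ (ijFix i j σ) B := fun x hx ↦
  (ijFix_apply_of_ne (ne_of_mem_of_not_mem hx hi) (ne_of_mem_of_not_mem (hB x hx) hi)).symm

lemma ijFix_injOn (i j : Fin n) : Set.InjOn (ijFix i j) {σ | σ i = j} := fun σ hσ π hπ h ↦ by
  have h_inv {ρ : Perm (Fin n)} (hρ : ρ i = j) : ρ = ijFix i j ρ * swap i ((ijFix i j ρ)⁻¹ j) := by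
    have h_swap : (ijFix i j ρ)⁻¹ j = ρ⁻¹ i :=
      Perm.inv_eq_iff_eq.2 (ijFix_apply_of_apply_eq hρ (ρ.apply_symm_apply i)).symm
    rw [h_swap, ijFix_of_eq hρ, mul_swap_mul_self]
  rw [h_inv hσ, h_inv hπ, h]

lemma fixSet_ssubset_fixSet_ijFix (hij : i ≠ j) (h : σ i = j) :
    fixSet σ ⊂ fixSet (ijFix i j σ) := by
  refine (ssubset_iff_of_subset fun x hx ↦ ?_).2
    ⟨i, mem_fixSet.2 (ijFix_apply_self h), fun hi ↦ hij ((mem_fixSet.1 hi).symm.trans h)⟩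
  rw [mem_fixSet] at hx ⊢
  have hxi : x ≠ i := by
    rintro rfl
    exact hij (hx.symm.trans h)
  rw [ijFix_apply_of_ne hxi (hx.symm ▸ hxi), hx]

lemma fixSet_ijFix_inter_fixSet_subset (h : σ i = π i) (hi : σ i ≠ i) :
    fixSet (ijFix i (σ i) σ) ∩ fixSet π ⊆ fixSet σ := by
  intro x hx
  rw [mem_inter, mem_fixSet, mem_fixSet] at hx
  rw [mem_fixSet]
  have hxi : x ≠ i := by
    rintro rfl
    exact hi (h.trans hx.2)
  by_cases hσx : σ x = i
  · have h_eq : π x = π i := by rw [← h, ← ijFix_apply_of_apply_eq rfl hσx, hx.1, hx.2]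
    exact absurd (π.injective h_eq) hxi
  · rw [← ijFix_apply_of_ne (j := σ i) hxi hσx, hx.1]

lemma commonCycles_ijFix_right_subset (hij : i ≠ j) (hσ : σ i = j) :
    commonCycles σ (ijFix i j π) ⊆ commonCycles (ijFix i j σ) π := by
  intro B hB
  rw [mem_commonCycles] at hB ⊢
  have hi : i ∉ B := fun hi ↦ by
    have h_eq : ijFix i j π i = j := (hB.eqOn hi).symm.trans hσ
    by_cases hπ : π i = j
    · exact hij ((ijFix_apply_self hπ).symm.trans h_eq)
    · exact hπ (ijFix_of_ne hπ ▸ h_eq)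
  have hj : j ∉ B := fun hj ↦ hi (hB.isCycleOn.apply_mem_iff.1 (hσ ▸ hj))
  refine hB.congr (eqOn_ijFix hi hB.2.1) fun x hx ↦ ?_
  by_cases hπx : π x = i
  · have h_mem := hB.2.2.1 x hx
    by_cases hπ : π i = j
    · exact absurd (ijFix_apply_of_apply_eq hπ hπx ▸ h_mem) hj
    · rw [ijFix_of_ne hπ]
  · exact ijFix_apply_of_ne (ne_of_mem_of_not_mem hx hi) hπx

lemma card_commonCycles_le_ijFix (hσ : σ i = j) (hπ : π i = j) :
    #(commonCycles σ π) ≤ #(commonCycles (ijFix i j σ) (ijFix i j π)) := by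
  let shrink (B : Finset (Fin n)) : Finset (Fin n) := if i ∈ B then {i} else B
  have shrink_subset (B) : shrink B ⊆ B := by
    grind
  have h_mem {B} (hB : B ∈ commonCycles σ π) :
      IsCommonCycle (ijFix i j σ) (ijFix i j π) (shrink B) := by
    rw [mem_commonCycles] at hB
    by_cases hi : i ∈ B
    · simpa only [shrink, if_pos hi] using
        isCommonCycle_singleton (ijFix_apply_self hσ) (ijFix_apply_self hπ)
    · simpa only [shrink, if_neg hi] using
        hB.congr (eqOn_ijFix hi hB.2.1) (eqOn_ijFix hi hB.2.2.1)
  refine card_le_card_of_injOn shrink (fun B hB ↦ mem_commonCycles.2 (h_mem hB))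
    fun A hA B hB h ↦ ?_
  obtain ⟨x, hx⟩ := (h_mem hA).1
  exact (pairwiseDisjoint_commonCycles σ π).elim_finset hA hB x (shrink_subset A hx)
    (shrink_subset B (h ▸ hx))

/-- The permutation by which `fixFamOp i j F` replaces the member `σ` of `F`. -/
def fixMember (i j : Fin n) (F : Set (Perm (Fin n))) (σ : Perm (Fin n)) : Perm (Fin n) :=
  if ijFix i j σ ∈ F then σ else ijFix i j σ

lemma apply_eq_of_ijFix_notMem (hσ : σ ∈ F) (h : ijFix i j σ ∉ F) : σ i = j :=
  by_contra fun h_ne ↦ h ((ijFix_of_ne h_ne).symm ▸ hσ)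

lemma fixMember_injOn (i j : Fin n) (F : Set (Perm (Fin n))) :
    Set.InjOn (fixMember i j F) F := by
  intro σ hσ π hπ h
  unfold fixMember at h
  split_ifs at h with hσ' hπ' hπ'
  · exact h
  · exact absurd (h ▸ hσ) hπ'
  · exact absurd (h ▸ hπ) hσ'
  · exact ijFix_injOn i j (apply_eq_of_ijFix_notMem hσ hσ') (apply_eq_of_ijFix_notMem hπ hπ') h

lemma ncard_fixFamOp (i j : Fin n) (F : Set (Perm (Fin n))) : (fixFamOp i j F).ncard = F.ncard :=
  (fixMember_injOn i j F).ncard_image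

lemma tCycleIntersecting_fixFamOp (hF : TCycleIntersecting t F) (hij : i ≠ j) :
    TCycleIntersecting t (fixFamOp i j F) := by
  rw [tCycleIntersecting_iff] at hF ⊢
  have h_left {σ π} (hσ : σ ∈ F) (hσ' : ijFix i j σ ∉ F) (hπ : ijFix i j π ∈ F) :
      t ≤ #(commonCycles (ijFix i j σ) π) :=
    (hF σ hσ _ hπ).trans <| card_le_card <|
      commonCycles_ijFix_right_subset hij (apply_eq_of_ijFix_notMem hσ hσ')
  rintro _ ⟨σ, hσ, rfl⟩ _ ⟨π, hπ, rfl⟩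
  dsimp only
  split_ifs with hσ' hπ' hπ'
  · exact hF σ hσ π hπ
  · rw [commonCycles_comm]
    exact h_left hπ hπ' hσ'
  · exact h_left hσ hσ' hπ'
  · exact (hF σ hσ π hπ).trans <| card_commonCycles_le_ijFix
      (apply_eq_of_ijFix_notMem hσ hσ') (apply_eq_of_ijFix_notMem hπ hπ')

lemma IsFixedFam.ijFix_mem (hF : IsFixedFam F) (hij : i ≠ j) (hσ : σ ∈ F) : ijFix i j σ ∈ F := by
  by_contra h
  have h_mem : fixMember i j F σ ∈ F :=
    (hF i j hij).subset (Set.mem_image_of_mem _ hσ)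
  rw [fixMember, if_neg h] at h_mem
  exact h h_mem

lemma sum_card_fixSet_lt_fixFamOp (hij : i ≠ j) (hF : fixFamOp i j F ≠ F) :
    ∑ σ ∈ F.toFinset, #(fixSet σ) < ∑ σ ∈ (fixFamOp i j F).toFinset, #(fixSet σ) := by
  have h_lt {σ} (hσ : σ ∈ F) (h : ijFix i j σ ∉ F) :
      #(fixSet σ) < #(fixSet (fixMember i j F σ)) := by
    rw [fixMember, if_neg h]
    exact card_lt_card (fixSet_ssubset_fixSet_ijFix hij (apply_eq_of_ijFix_notMem hσ h))
  obtain ⟨σ, hσ, hσ'⟩ : ∃ σ ∈ F, ijFix i j σ ∉ F := by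
    by_contra! h
    exact hF ((Set.image_congr fun σ hσ ↦ if_pos (h σ hσ)).trans (Set.image_id F))
  have h_image : (fixFamOp i j F).toFinset = F.toFinset.image (fixMember i j F) := by
    ext ρ
    rw [Set.mem_toFinset, mem_image]
    simp only [Set.mem_toFinset]
    rfl
  rw [h_image, sum_image (by simpa using fixMember_injOn i j F)]
  refine sum_lt_sum (fun π hπ ↦ ?_) ⟨σ, Set.mem_toFinset.2 hσ, h_lt hσ hσ'⟩
  by_cases h : ijFix i j π ∈ F
  · rw [fixMember, if_pos h]
  · exact (h_lt (Set.mem_toFinset.1 hπ) h).le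

theorem TCycleIntersecting.induction_fixFamOp {p : Set (Perm (Fin n)) → Prop}
    (fixed : ∀ F, TCycleIntersecting t F → IsFixedFam F → p F)
    (step : ∀ F i j, TCycleIntersecting t F → i ≠ j → p (fixFamOp i j F) → p F)
    (hF : TCycleIntersecting t F) : p F := by
  by_contra h
  obtain ⟨F, ⟨hF, h⟩, h_max⟩ := Set.exists_max_image {F | TCycleIntersecting t F ∧ ¬p F}
    (fun F ↦ ∑ σ ∈ F.toFinset, #(fixSet σ)) (Set.toFinite _) ⟨F, hF, h⟩
  refine h (fixed F hF fun i j hij ↦ by_contra fun h_ne ↦ ?_)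
  exact (sum_card_fixSet_lt_fixFamOp hij h_ne).not_ge
    (h_max _ ⟨tCycleIntersecting_fixFamOp hF hij, mt (step F i j hF hij) h⟩)

lemma TCycleIntersecting.setIntersecting_image_fixSet (hF : TCycleIntersecting t F)
    (h_fixed : IsFixedFam F) : SetIntersecting t (F.toFinset.image fixSet) := by
  simp only [SetIntersecting, forall_mem_image, Set.mem_toFinset]
  intro σ hσ π hπ
  obtain ⟨ρ, ⟨hρ, h_sub⟩, h_max⟩ := Set.exists_max_image
    {ρ ∈ F | fixSet ρ ∩ fixSet π ⊆ fixSet σ} (fun ρ ↦ #(fixSet ρ)) (Set.toFinite _)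
    ⟨σ, hσ, inter_subset_left⟩
  have h_agree : ∀ x, ρ x = π x → ρ x = x := fun x h ↦ by
    by_contra hx
    have h_mem := h_fixed.ijFix_mem (Ne.symm hx) hρ
    have h_sub' := fixSet_ijFix_inter_fixSet_subset h hx
    exact (card_lt_card (fixSet_ssubset_fixSet_ijFix (Ne.symm hx) rfl)).not_ge
      (h_max _ ⟨h_mem, (subset_inter h_sub' inter_subset_right).trans h_sub⟩)
  calc t
      ≤ #(commonCycles ρ π) := tCycleIntersecting_iff.1 hF ρ hρ π hπ
    _ ≤ #(fixSet ρ ∩ fixSet π) := card_commonCycles_le_card_fixSet_inter h_agree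
    _ ≤ #(fixSet σ ∩ fixSet π) := card_le_card (subset_inter h_sub inter_subset_right)

end Fixing

section Uniqueness

variable {n t : ℕ} {i j : Fin n} {σ π : Perm (Fin n)} {F : Set (Perm (Fin n))}
  {T : Finset (Fin n)}

lemma exists_mem_upSet_forall_ne (hT : #T + 2 ≤ n) (hσ : σ ∈ UpSet T) :
    ∃ π ∈ UpSet T, ∀ x ∉ T, π x ≠ σ x := by
  obtain ⟨c, hc, h_supp⟩ := exists_cycleOn Tᶜ
  have hcT : ∀ x ∈ T, c x = x := fun x hx ↦
    Perm.notMem_support.1 fun h ↦ mem_compl.1 (h_supp h) hx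
  have h_nontrivial : (Tᶜ : Finset (Fin n)).Nontrivial := by
    rw [← one_lt_card_iff_nontrivial, card_compl, Fintype.card_fin]
    omega
  refine ⟨σ * c, fun x hx ↦ by rw [Perm.mul_apply, hcT x hx, hσ x hx], fun x hx h ↦ ?_⟩
  exact hc.apply_ne (nontrivial_coe.2 h_nontrivial) (mem_compl.2 hx) (σ.injective h)

lemma ijFix_apply_eq_fixMember_apply (hσ : σ i = j) (hπ : π ∈ F) (hi : fixMember i j F π i = i)
    {x : Fin n} (hxi : x ≠ i) (h : σ x = π x) : ijFix i j σ x = fixMember i j F π x := by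
  by_cases hσx : σ x = i
  · rw [ijFix_apply_of_apply_eq hσ hσx]
    by_cases hπF : ijFix i j π ∈ F
    · rw [fixMember, if_pos hπF] at hi
      exact absurd (π.injective (h.symm.trans (hσx.trans hi.symm))) hxi
    · rw [fixMember, if_neg hπF,
        ijFix_apply_of_apply_eq (apply_eq_of_ijFix_notMem hπ hπF) (h ▸ hσx)]
  · rw [ijFix_apply_of_ne hxi hσx, h, fixMember]
    split_ifs
    · rfl
    · rw [ijFix_apply_of_ne hxi (h ▸ hσx)]

lemma mem_and_apply_eq_of_ijFix_mem_upSet (hi : i ∉ T) (hσ : σ i = j) (hσT : σ ∉ UpSet T)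
    (hτ : ijFix i j σ ∈ UpSet T) : j ∈ T ∧ σ j = i := by
  obtain ⟨z, hz, hσz⟩ : ∃ z ∈ T, σ z ≠ z := by simpa [UpSet] using hσT
  by_cases hzi : σ z = i
  · obtain rfl : z = j := (hτ z hz).symm.trans (ijFix_apply_of_apply_eq hσ hzi)
    exact ⟨hz, hzi⟩
  · exact absurd ((ijFix_apply_of_ne (ne_of_mem_of_not_mem hz hi) hzi).symm.trans (hτ z hz)) hσz

lemma forall_ne_of_forall_ijFix_ne (hij : i ≠ j) (hσ : σ i = j) (hσT : σ ∉ UpSet T) (hπ : π ∈ F)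
    (hτ : ijFix i j σ ∈ UpSet T) (hτ' : fixMember i j F π ∈ UpSet T)
    (h : ∀ x ∉ T, ijFix i j σ x ≠ fixMember i j F π x) : ∀ x ∉ T, σ x ≠ π x := by
  intro x hx h_eq
  by_cases hi : i ∈ T
  · exact h x hx (ijFix_apply_eq_fixMember_apply hσ hπ (hτ' i hi)
      (ne_of_mem_of_not_mem hi hx).symm h_eq)
  obtain ⟨hj, hσj⟩ := mem_and_apply_eq_of_ijFix_mem_upSet hi hσ hσT hτ
  have hπF : ijFix i j π ∈ F := by
    by_contra hπF
    refine h i hi ?_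
    rw [fixMember, if_neg hπF, ijFix_apply_self hσ,
      ijFix_apply_self (apply_eq_of_ijFix_notMem hπ hπF)]
  rw [fixMember, if_pos hπF] at h hτ'
  have hxj : x ≠ j := (ne_of_mem_of_not_mem hj hx).symm
  have hxi : x ≠ i := by
    rintro rfl
    exact hij (π.injective (h_eq.symm.trans (hσ.trans (hτ' j hj).symm)))
  exact h x hx ((ijFix_apply_of_ne hxi fun h ↦ hxj (σ.injective (h.trans hσj.symm))).trans h_eq)

lemma TCycleIntersecting.eq_upSet_of_fixFamOp_eq (hF : TCycleIntersecting t F) (hn : t + 2 ≤ n)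
    (hij : i ≠ j) (hT : #T = t) (h : fixFamOp i j F = UpSet T) : F = UpSet T := by
  have h_mem {ρ} (hρ : ρ ∈ F) : fixMember i j F ρ ∈ UpSet T := h ▸ Set.mem_image_of_mem _ hρ
  refine Set.eq_of_subset_of_ncard_le (fun σ hσ ↦ by_contra fun hσT ↦ ?_)
    (by rw [← h, ncard_fixFamOp])
  have hσF : ijFix i j σ ∉ F := fun hσF ↦ hσT (by simpa only [fixMember, if_pos hσF] using h_mem hσ)
  have hτ : ijFix i j σ ∈ UpSet T := by simpa only [fixMember, if_neg hσF] using h_mem hσ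
  obtain ⟨τ', hτ', h_ne⟩ := exists_mem_upSet_forall_ne (hT.symm ▸ hn) hτ
  obtain ⟨π, hπ, rfl⟩ := h ▸ hτ'
  have h_disagree := forall_ne_of_forall_ijFix_ne hij (apply_eq_of_ijFix_notMem hσ hσF) hσT hπ
    hτ (h_mem hπ) fun x hx ↦ (h_ne x hx).symm
  exact ((card_commonCycles_lt hσT h_disagree).trans_eq hT).not_ge
    (tCycleIntersecting_iff.1 hF σ hσ π hπ)

theorem TCycleIntersecting.ncard_le (ht : 0 < t) (hn : 2 * t + 1 ≤ n)
    (hF : TCycleIntersecting t F) : F.ncard ≤ (n - t).factorial := by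
  refine hF.induction_fixFamOp (p := fun F ↦ F.ncard ≤ (n - t).factorial)
    (fun F hF h_fixed ↦ ?_) fun F i j _ _ ih ↦ by rwa [ncard_fixFamOp] at ih
  exact (ncard_le_weight_image_fixSet F).trans
    ((hF.setIntersecting_image_fixSet h_fixed).weight_numDerangements_le ht hn)

theorem TCycleIntersecting.exists_eq_upSet (ht : 0 < t) (hn : 2 * t + 1 ≤ n)
    (hF : TCycleIntersecting t F) (h_card : F.ncard = (n - t).factorial) :
    ∃ T : Finset (Fin n), #T = t ∧ F = UpSet T := by
  revert h_card
  refine hF.induction_fixFamOp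
    (p := fun F ↦ F.ncard = (n - t).factorial → ∃ T, #T = t ∧ F = UpSet T)
    (fun F hF h_fixed h_card ↦ ?_) fun F i j hF hij ih h_card ↦ ?_
  · have h𝒢 := hF.setIntersecting_image_fixSet h_fixed
    obtain ⟨T, hT, h_sub⟩ := h𝒢.exists_forall_subset_of_weight_eq ht hn <|
      (h𝒢.weight_numDerangements_le ht hn).antisymm
        (h_card.symm.trans_le (ncard_le_weight_image_fixSet F))
    refine ⟨T, hT, Set.eq_of_subset_of_ncard_le (fun σ hσ x hx ↦ ?_) ?_⟩
    · exact mem_fixSet.1 (h_sub _ (mem_image_of_mem _ (Set.mem_toFinset.2 hσ)) hx)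
    · rw [ncard_upSet, hT, h_card]
  · obtain ⟨T, hT, h_eq⟩ := ih (by rwa [ncard_fixFamOp])
    exact ⟨T, hT, hF.eq_upSet_of_fixFamOp_eq (by omega) hij hT h_eq⟩

end Uniqueness

/-- If `n ≥ 2t+1` and `F` is a `t`-cycle-intersecting family of permutations of `[n]`,
then `|F| ≤ (n-t)!`, with equality iff `F` is the stabilizer of `t` points. -/
theorem stmt0 {n t : ℕ} (ht : 0 < t) (hn : 2 * t + 1 ≤ n)
    (F : Set (Equiv.Perm (Fin n))) (hF : TCycleIntersecting t F) :
    F.ncard ≤ Nat.factorial (n - t) ∧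
      (F.ncard = Nat.factorial (n - t) ↔ IsTPointStabilizer t F) := by
  refine ⟨hF.ncard_le ht hn, fun h ↦ isTPointStabilizer_iff.2 (hF.exists_eq_upSet ht hn h), ?_⟩
  rw [isTPointStabilizer_iff]
  rintro ⟨T, rfl, rfl⟩
  exact ncard_upSet T
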